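/- arXiv:2512.15314 — 11 statements merged into one kernel-verified Lean document; each statement's English description precedes it below -/
import Mathlib

section
/- Let V be a closed subspace of W such that the composition of i with the inclusion map V ↪ W is a compact operator from V to H. Then the solution operator R_V : H → H is a compact continuous linear operator which is self-adjoint (⟨R_V f, g⟩_H = ⟨f, R_V g⟩_H for all f, g ∈ H), positive semidefinite (⟨R_V f, f⟩_H ≥ 0 for all f ∈ H), and satisfies ‖R_V f‖_H ≤ ‖f‖_H for all f ∈ H. -/
open scoped InnerProductSpace

/-- Let `H`, `W` be real Hilbert spaces, `i : W → H` continuous linear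
with `‖i w‖ ≤ ‖w‖`.  Let `V` be a closed subspace of `W` such that the composition of `i`
with the inclusion `V ↪ W` is a compact operator from `V` to `H`.  Let `uV f ∈ V` be the
Riesz representative, i.e. `⟪uV f, v⟫_W = ⟪f, i v⟫_H` for all `v ∈ V`, and let
`R_V f := i (uV f)` be the solution operator.  Then `R_V` is a compact continuous linear
operator on `H` which is self-adjoint, positive semidefinite, and satisfies
`‖R_V f‖ ≤ ‖f‖` for all `f`. -/
theorem stmt_0
    {H W : Type*} [NormedAddCommGroup H] [InnerProductSpace ℝ H] [CompleteSpace H]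
    [NormedAddCommGroup W] [InnerProductSpace ℝ W] [CompleteSpace W]
    (i : W →L[ℝ] H) (hi : ∀ w : W, ‖i w‖ ≤ ‖w‖)
    (V : Submodule ℝ W) (hVclosed : IsClosed (V : Set W))
    (hcompact : IsCompactOperator (fun v : V => i (v : W)))
    (uV : H → W) (huVmem : ∀ f : H, uV f ∈ V)
    (huV : ∀ f : H, ∀ v ∈ V, ⟪uV f, v⟫_ℝ = ⟪f, i v⟫_ℝ) :
    ∃ R : H →L[ℝ] H,
      (∀ f : H, R f = i (uV f)) ∧
      IsCompactOperator (⇑R) ∧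
      (∀ f g : H, ⟪R f, g⟫_ℝ = ⟪f, R g⟫_ℝ) ∧
      (∀ f : H, 0 ≤ ⟪R f, f⟫_ℝ) ∧
      (∀ f : H, ‖R f‖ ≤ ‖f‖) := by
  have uniq : ∀ w ∈ V, ∀ w' ∈ V, (∀ v ∈ V, ⟪w, v⟫_ℝ = ⟪w', v⟫_ℝ) → w = w' := by
    intro w hw w' hw' h
    have h1 := h (w - w') (V.sub_mem hw hw')
    have h2 : ⟪w - w', w - w'⟫_ℝ = 0 := by
      rw [inner_sub_left, h1, sub_self]
    exact sub_eq_zero.mp (inner_self_eq_zero.mp h2)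
  have bound : ∀ f, ‖uV f‖ ≤ ‖f‖ := by
    intro f
    have h1 := huV f (uV f) (huVmem f)
    rw [real_inner_self_eq_norm_sq] at h1
    have h2 := real_inner_le_norm f (i (uV f))
    have h3 := mul_le_mul_of_nonneg_left (hi (uV f)) (norm_nonneg f)
    by_contra! hlt
    have h4 : 0 < ‖uV f‖ := lt_of_le_of_lt (norm_nonneg f) hlt
    nlinarith
  let L : H →ₗ[ℝ] V :=
    { toFun := fun f => ⟨uV f, huVmem f⟩
      map_add' := by
        intro f g
        apply Subtype.ext
        refine uniq _ (huVmem _) _ (V.add_mem (huVmem f) (huVmem g)) ?_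
        intro v hv
        change ⟪uV (f + g), v⟫_ℝ = ⟪uV f + uV g, v⟫_ℝ
        rw [inner_add_left, huV _ v hv, huV _ v hv, huV _ v hv, inner_add_left]
      map_smul' := by
        intro c f
        apply Subtype.ext
        refine uniq _ (huVmem _) _ (V.smul_mem c (huVmem f)) ?_
        intro v hv
        change ⟪uV (c • f), v⟫_ℝ = ⟪c • uV f, v⟫_ℝ
        rw [real_inner_smul_left, huV _ v hv, huV _ v hv, real_inner_smul_left] }
  let U : H →L[ℝ] V := L.mkContinuous 1 (fun f => by
    rw [one_mul]
    exact bound f)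
  have key : ∀ f g, ⟪f, i (uV g)⟫_ℝ = ⟪uV f, uV g⟫_ℝ := fun f g =>
    (huV f (uV g) (huVmem g)).symm
  refine ⟨(i.comp V.subtypeL).comp U, fun f => rfl, hcompact.comp_clm U, ?_, ?_, ?_⟩
  · intro f g
    change ⟪i (uV f), g⟫_ℝ = ⟪f, i (uV g)⟫_ℝ
    rw [real_inner_comm, key, key, real_inner_comm]
  · intro f
    change 0 ≤ ⟪i (uV f), f⟫_ℝ
    rw [real_inner_comm, key]
    exact real_inner_self_nonneg
  · intro f
    exact (hi (uV f)).trans (bound f)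
end

section
/- Let V be a finite-dimensional subspace of W. Then the solution operator R_V : H → H is a continuous linear operator of finite rank (its range is contained in the finite-dimensional subspace i(V) of H), is self-adjoint (⟨R_V f, g⟩_H = ⟨f, R_V g⟩_H for all f, g ∈ H), positive semidefinite (⟨R_V f, f⟩_H ≥ 0 for all f ∈ H), and satisfies ‖R_V f‖_H ≤ ‖f‖_H for all f ∈ H. -/
open scoped InnerProductSpace

/-- Let `H`, `W` be real Hilbert spaces, `i : W → H` continuous linear
with `‖i w‖ ≤ ‖w‖`.  Let `V` be a finite-dimensional subspace of `W`, let `uV f ∈ V` be the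
Riesz representative (`⟪uV f, v⟫_W = ⟪f, i v⟫_H` for all `v ∈ V`) and `R_V f := i (uV f)`.
Then `R_V` is a continuous linear operator of finite rank (its range is contained in the
finite-dimensional subspace `i(V)` of `H`), self-adjoint, positive semidefinite, and
satisfies `‖R_V f‖ ≤ ‖f‖` for all `f`. -/
theorem stmt_1
    {H W : Type*} [NormedAddCommGroup H] [InnerProductSpace ℝ H] [CompleteSpace H]
    [NormedAddCommGroup W] [InnerProductSpace ℝ W] [CompleteSpace W]
    (i : W →L[ℝ] H) (hi : ∀ w : W, ‖i w‖ ≤ ‖w‖)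
    (V : Submodule ℝ W) (hVfin : FiniteDimensional ℝ V)
    (uV : H → W) (huVmem : ∀ f : H, uV f ∈ V)
    (huV : ∀ f : H, ∀ v ∈ V, ⟪uV f, v⟫_ℝ = ⟪f, i v⟫_ℝ) :
    ∃ R : H →L[ℝ] H,
      (∀ f : H, R f = i (uV f)) ∧
      FiniteDimensional ℝ (V.map i.toLinearMap) ∧
      (∀ f : H, R f ∈ V.map i.toLinearMap) ∧
      (∀ f g : H, ⟪R f, g⟫_ℝ = ⟪f, R g⟫_ℝ) ∧
      (∀ f : H, 0 ≤ ⟪R f, f⟫_ℝ) ∧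
      (∀ f : H, ‖R f‖ ≤ ‖f‖) := by
  have key : ∀ x ∈ V, (∀ v ∈ V, ⟪x, v⟫_ℝ = 0) → x = 0 := by
    intro x hx h
    exact inner_self_eq_zero.mp (h x hx)
  have hadd : ∀ f g, uV (f + g) = uV f + uV g := by
    intro f g
    refine sub_eq_zero.mp (key _ (V.sub_mem (huVmem _) (V.add_mem (huVmem f) (huVmem g))) ?_)
    intro v hv
    rw [inner_sub_left, inner_add_left, huV _ v hv, huV _ v hv, huV _ v hv, inner_add_left,
      sub_self]
  have hsmul : ∀ (c : ℝ) f, uV (c • f) = c • uV f := by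
    intro c f
    refine sub_eq_zero.mp (key _ (V.sub_mem (huVmem _) (V.smul_mem c (huVmem f))) ?_)
    intro v hv
    rw [inner_sub_left, real_inner_smul_left, huV _ v hv, huV _ v hv, real_inner_smul_left,
      sub_self]
  have hu : ∀ f, ‖uV f‖ ≤ ‖f‖ := by
    intro f
    have h1 : ‖uV f‖ * ‖uV f‖ ≤ ‖f‖ * ‖uV f‖ := by
      rw [← real_inner_self_eq_norm_mul_norm, huV f _ (huVmem f)]
      exact (real_inner_le_norm _ _).trans
        (mul_le_mul_of_nonneg_left (hi _) (norm_nonneg _))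
    rcases (norm_nonneg (uV f)).eq_or_lt with h | h
    · rw [← h]; exact norm_nonneg _
    · exact le_of_mul_le_mul_right h1 h
  have hR : ∀ f, ‖i (uV f)‖ ≤ ‖f‖ := fun f => (hi _).trans (hu f)
  have hin : ∀ f g, ⟪f, i (uV g)⟫_ℝ = ⟪uV f, uV g⟫_ℝ := fun f g =>
    (huV f _ (huVmem g)).symm
  let L : H →ₗ[ℝ] H :=
    { toFun := fun f => i (uV f)
      map_add' := fun f g => by rw [hadd, map_add]
      map_smul' := fun c f => by rw [hsmul, map_smul, RingHom.id_apply] }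
  refine ⟨L.mkContinuous 1 (fun f => by rw [one_mul]; exact hR f), fun f => rfl,
    inferInstance, fun f => ⟨uV f, huVmem f, rfl⟩, fun f g => ?_, fun f => ?_, hR⟩
  · change ⟪i (uV f), g⟫_ℝ = ⟪f, i (uV g)⟫_ℝ
    rw [real_inner_comm, hin, hin, real_inner_comm]
  · change 0 ≤ ⟪i (uV f), f⟫_ℝ
    rw [real_inner_comm, hin]
    exact real_inner_self_nonneg
end

section
/- Let V be a closed subspace of W and suppose there is a constant α > 0 such that ‖v‖_W² ≥ (1 + α²) ‖i v‖_H² for all v ∈ V (an abstract Friedrichs inequality). Then every eigenvalue μ of the solution operator R_V — that is, every μ ∈ ℝ for which there exists f ∈ H, f ≠ 0, with R_V f = μ f — satisfies 0 ≤ μ ≤ 1/(1 + α²); in particular, all eigenvalues of R_V lie in the interval [0, 1). -/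
open scoped InnerProductSpace

/-- Let `H`, `W` be real Hilbert spaces, `i : W → H` continuous linear
with `‖i w‖ ≤ ‖w‖`.  Let `V` be a closed subspace of `W` and suppose there is `α > 0`
with `‖v‖² ≥ (1 + α²)‖i v‖²` for all `v ∈ V` (abstract Friedrichs inequality).  With
`uV f ∈ V` the Riesz representative (`⟪uV f, v⟫_W = ⟪f, i v⟫_H` for all `v ∈ V`) and
`R_V f := i (uV f)`, every eigenvalue `μ` of `R_V` (i.e. `μ` such that `R_V f = μ • f`
for some `f ≠ 0`) satisfies `0 ≤ μ ≤ 1/(1 + α²)`; in particular `μ` lies in `[0, 1)`. -/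
theorem stmt_2
    {H W : Type*} [NormedAddCommGroup H] [InnerProductSpace ℝ H] [CompleteSpace H]
    [NormedAddCommGroup W] [InnerProductSpace ℝ W] [CompleteSpace W]
    (i : W →L[ℝ] H) (hi : ∀ w : W, ‖i w‖ ≤ ‖w‖)
    (V : Submodule ℝ W) (hVclosed : IsClosed (V : Set W))
    (α : ℝ) (hα : 0 < α)
    (hFriedrichs : ∀ v ∈ V, (1 + α ^ 2) * ‖i v‖ ^ 2 ≤ ‖v‖ ^ 2)
    (uV : H → W) (huVmem : ∀ f : H, uV f ∈ V)
    (huV : ∀ f : H, ∀ v ∈ V, ⟪uV f, v⟫_ℝ = ⟪f, i v⟫_ℝ) :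
    ∀ μ : ℝ, (∃ f : H, f ≠ 0 ∧ i (uV f) = μ • f) →
      0 ≤ μ ∧ μ ≤ 1 / (1 + α ^ 2) ∧ μ < 1 := by
  rintro μ ⟨f, hf, h⟩
  have hF : 0 < ‖f‖ ^ 2 := pow_pos (norm_pos_iff.mpr hf) 2
  have h1 := huV f (uV f) (huVmem f)
  rw [h, real_inner_self_eq_norm_sq, real_inner_smul_right, real_inner_self_eq_norm_sq] at h1
  have h2 := hFriedrichs (uV f) (huVmem f)
  rw [h, h1, norm_smul, mul_pow, Real.norm_eq_abs, sq_abs, ← mul_assoc] at h2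
  have h3 : (1 + α ^ 2) * μ ^ 2 ≤ μ := le_of_mul_le_mul_right h2 hF
  have hα2 : 0 < α ^ 2 := pow_pos hα 2
  have h0 : 0 ≤ μ := le_trans (by positivity) h3
  have h4 : μ ≤ 1 / (1 + α ^ 2) := by
    rw [le_div_iff₀ (by positivity)]
    rcases h0.eq_or_lt with h5 | h5
    · rw [← h5]; norm_num
    · refine le_of_mul_le_mul_right ?_ h5
      linarith
  refine ⟨h0, h4, lt_of_le_of_lt h4 ?_⟩
  rw [div_lt_one (by positivity)]
  linarith
end

section
/- Assume i is injective. Fix finite-dimensional subspaces X_n of W and G_n of G, let V_n := {w ∈ X_n + G_n : ⟨i w, i g⟩_H = 0 for all g ∈ G_n}, and let R_n := R_{V_n}. Let λ ∈ ℝ with λ ≠ −1, x ∈ X_n and g ∈ G_n with ξ := x + g ≠ 0. Then (λ, x, g) solves the discrete mixed eigenvalue problem if and only if ξ ∈ V_n and R_n(i ξ) = (λ + 1)⁻¹ (i ξ). -/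
open scoped InnerProductSpace

/-- Let `H`, `W` be real Hilbert spaces, `i : W → H` continuous linear,
injective, with `‖i w‖ ≤ ‖w‖`; `b(u, v) := ⟪u, v⟫_W − ⟪i u, i v⟫_H`.  Let `G` be a
gradient-type closed subspace (`⟪w, g⟫_W = ⟪i w, i g⟫_H` for `w ∈ W`, `g ∈ G`),
`Xn ≤ W` and `Gn ≤ G` finite-dimensional, `Vn := {w ∈ Xn + Gn : ⟪i w, i g⟫ = 0 ∀ g ∈ Gn}`,
and `un f ∈ Vn` the Riesz representative for `R_n = R_{Vn}`.  Let `λ ≠ −1`, `x ∈ Xn`,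
`g ∈ Gn` with `ξ := x + g ≠ 0`.  Then `(λ, x, g)` solves the discrete mixed eigenvalue
problem iff `ξ ∈ Vn` and `R_n (i ξ) = (λ + 1)⁻¹ • (i ξ)`. -/
theorem stmt_4
    {H W : Type*} [NormedAddCommGroup H] [InnerProductSpace ℝ H] [CompleteSpace H]
    [NormedAddCommGroup W] [InnerProductSpace ℝ W] [CompleteSpace W]
    (i : W →L[ℝ] H) (hi : ∀ w : W, ‖i w‖ ≤ ‖w‖) (hinj : Function.Injective i)
    (G : Submodule ℝ W) (hGclosed : IsClosed (G : Set W))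
    (hG : ∀ w : W, ∀ g ∈ G, ⟪w, g⟫_ℝ = ⟪i w, i g⟫_ℝ)
    (Xn : Submodule ℝ W) (hXnfin : FiniteDimensional ℝ Xn)
    (Gn : Submodule ℝ W) (hGnG : Gn ≤ G) (hGnfin : FiniteDimensional ℝ Gn)
    (un : H → W)
    (hunmem : ∀ f : H, un f ∈ Xn ⊔ Gn)
    (hunorth : ∀ f : H, ∀ g ∈ Gn, ⟪i (un f), i g⟫_ℝ = 0)
    (hun : ∀ f : H, ∀ v ∈ Xn ⊔ Gn, (∀ g ∈ Gn, ⟪i v, i g⟫_ℝ = 0) →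
      ⟪un f, v⟫_ℝ = ⟪f, i v⟫_ℝ)
    (lam : ℝ) (hlam : lam ≠ -1)
    (x : W) (hx : x ∈ Xn) (g : W) (hg : g ∈ Gn) (hne : x + g ≠ 0) :
    ((∀ x' ∈ Xn, ⟪x, x'⟫_ℝ - ⟪i x, i x'⟫_ℝ = lam * ⟪i (x + g), i x'⟫_ℝ) ∧
        (∀ g' ∈ Gn, ⟪i (x + g), i g'⟫_ℝ = 0)) ↔
      ((x + g ∈ Xn ⊔ Gn ∧ ∀ g' ∈ Gn, ⟪i (x + g), i g'⟫_ℝ = 0) ∧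
        i (un (i (x + g))) = (lam + 1)⁻¹ • (i (x + g))) := by
  have hsym : ∀ w : W, ∀ p ∈ Gn, ⟪p, w⟫_ℝ = ⟪i p, i w⟫_ℝ := by
    intro w p hp
    rw [real_inner_comm, hG w p (hGnG hp), real_inner_comm]
  have hmem : x + g ∈ Xn ⊔ Gn := Submodule.add_mem_sup hx hg
  have hc : lam + 1 ≠ 0 := fun h => hlam (by linarith)
  have hb : ∀ w : W, ⟪x, w⟫_ℝ - ⟪i x, i w⟫_ℝ = ⟪x + g, w⟫_ℝ - ⟪i (x + g), i w⟫_ℝ := by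
    intro w
    rw [map_add, inner_add_left, inner_add_left, hsym w g hg]
    ring
  generalize x + g = ξ at *
  constructor
  · rintro ⟨h1, h2⟩
    refine ⟨⟨hmem, h2⟩, ?_⟩
    have key : ∀ w ∈ Xn ⊔ Gn, ⟪ξ, w⟫_ℝ = (lam + 1) * ⟪i ξ, i w⟫_ℝ := by
      intro w hw
      obtain ⟨a, ha, p, hp, rfl⟩ := Submodule.mem_sup.1 hw
      have e1 := h1 a ha
      rw [hb] at e1
      have e2 := h2 p hp
      have e3 := hG ξ p (hGnG hp)
      rw [map_add, inner_add_right, inner_add_right, e3, e2]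
      linarith
    have hd : un (i ξ) - (lam + 1)⁻¹ • ξ ∈ Xn ⊔ Gn :=
      Submodule.sub_mem _ (hunmem _) (Submodule.smul_mem _ _ hmem)
    have hd2 : ∀ p ∈ Gn, ⟪i (un (i ξ) - (lam + 1)⁻¹ • ξ), i p⟫_ℝ = 0 := by
      intro p hp
      rw [map_sub, map_smul, inner_sub_left, real_inner_smul_left, hunorth _ p hp, h2 p hp]
      simp
    have e1 := hun (i ξ) _ hd hd2
    have e2 := key _ hd
    have e3 : un (i ξ) - (lam + 1)⁻¹ • ξ = 0 := by
      rw [← inner_self_eq_zero (𝕜 := ℝ)]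
      conv_lhs => rw [inner_sub_left]
      rw [real_inner_smul_left, e1, e2, ← mul_assoc, inv_mul_cancel₀ hc]
      ring
    rw [sub_eq_zero.1 e3, map_smul]
  · rintro ⟨⟨-, h2⟩, h3⟩
    refine ⟨?_, h2⟩
    rw [← map_smul] at h3
    have h4 := hinj h3
    intro a ha
    rw [hb]
    have hp : (Gn.starProjection a) ∈ Gn := Submodule.starProjection_apply_mem _ _
    have ho : ∀ q ∈ Gn, ⟪a - Gn.starProjection a, q⟫_ℝ = 0 :=
      fun q hq => Submodule.starProjection_inner_eq_zero _ q hq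
    generalize Gn.starProjection a = p at *
    have e1 := hun (i ξ) (a - p)
      (Submodule.sub_mem _ (Submodule.mem_sup_left ha) (Submodule.mem_sup_right hp))
      (fun q hq => by rw [← hG _ q (hGnG hq)]; exact ho q hq)
    rw [h4, real_inner_smul_left, map_sub, inner_sub_right, inner_sub_right,
      hG ξ p (hGnG hp), h2 p hp, sub_zero, sub_zero] at e1
    rw [← e1]
    field_simp
    ring
end

section
/- Fix finite-dimensional subspaces X_n of W and G_n of G, and assume the abstract discrete exact sequence property: every x ∈ X_n with b(x, x) = 0 belongs to G_n. Then every eigenvalue of the discrete mixed eigenvalue problem is positive: if λ ∈ ℝ, x ∈ X_n and g ∈ G_n with x + g ≠ 0 solve the problem, then λ > 0. -/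
open scoped InnerProductSpace

/-- Let `H`, `W` be real Hilbert spaces, `i : W → H` continuous linear
with `‖i w‖ ≤ ‖w‖`; `b(u, v) := ⟪u, v⟫_W − ⟪i u, i v⟫_H`.  Let `G` be a gradient-type
closed subspace (`⟪w, g⟫_W = ⟪i w, i g⟫_H` for `w ∈ W`, `g ∈ G`), and `Xn ≤ W`, `Gn ≤ G`
finite-dimensional subspaces satisfying the abstract discrete exact sequence property:
every `x ∈ Xn` with `b(x, x) = 0` belongs to `Gn`.  Then every eigenvalue of the discrete
mixed eigenvalue problem is positive: if `λ ∈ ℝ`, `x ∈ Xn`, `g ∈ Gn` with `x + g ≠ 0`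
solve the problem, then `λ > 0`. -/
theorem stmt_5
    {H W : Type*} [NormedAddCommGroup H] [InnerProductSpace ℝ H] [CompleteSpace H]
    [NormedAddCommGroup W] [InnerProductSpace ℝ W] [CompleteSpace W]
    (i : W →L[ℝ] H) (hi : ∀ w : W, ‖i w‖ ≤ ‖w‖)
    (G : Submodule ℝ W) (hGclosed : IsClosed (G : Set W))
    (hG : ∀ w : W, ∀ g ∈ G, ⟪w, g⟫_ℝ = ⟪i w, i g⟫_ℝ)
    (Xn : Submodule ℝ W) (hXnfin : FiniteDimensional ℝ Xn)
    (Gn : Submodule ℝ W) (hGnG : Gn ≤ G) (hGnfin : FiniteDimensional ℝ Gn)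
    (hexact : ∀ x ∈ Xn, ⟪x, x⟫_ℝ - ⟪i x, i x⟫_ℝ = 0 → x ∈ Gn)
    (lam : ℝ) (x : W) (hx : x ∈ Xn) (g : W) (hg : g ∈ Gn) (hne : x + g ≠ 0)
    (heig : ∀ x' ∈ Xn, ⟪x, x'⟫_ℝ - ⟪i x, i x'⟫_ℝ = lam * ⟪i (x + g), i x'⟫_ℝ)
    (hconstraint : ∀ g' ∈ Gn, ⟪i (x + g), i g'⟫_ℝ = 0) :
    0 < lam := by
  have h1 := heig x hx
  have h2 : ⟪i (x + g), i x⟫_ℝ = ⟪i (x + g), i (x + g)⟫_ℝ := by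
    conv_rhs => rw [map_add i x g, inner_add_right, ← map_add i x g, hconstraint g hg, add_zero]
  rw [h2] at h1
  have hb : 0 ≤ ⟪x, x⟫_ℝ - ⟪i x, i x⟫_ℝ := by
    rw [real_inner_self_eq_norm_sq, real_inner_self_eq_norm_sq, sub_nonneg]
    exact pow_le_pow_left₀ (norm_nonneg _) (hi x) 2
  have hb0 : ⟪x, x⟫_ℝ - ⟪i x, i x⟫_ℝ ≠ 0 := by
    intro h0
    have hm : x + g ∈ Gn := Gn.add_mem (hexact x hx h0) hg
    have h3 := hG (x + g) (x + g) (hGnG hm)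
    rw [hconstraint _ hm] at h3
    exact hne (inner_self_eq_zero.mp h3)
  have hpos : 0 < lam * ⟪i (x + g), i (x + g)⟫_ℝ := h1 ▸ lt_of_le_of_ne hb hb0.symm
  exact pos_of_mul_pos_left hpos real_inner_self_nonneg
end

section
/- Let G_n be a finite-dimensional subspace of G. For every w ∈ W there exists a unique r ∈ G_n such that ⟨i w + i r, i g⟩_H = 0 for all g ∈ G_n. Moreover, for every f ∈ H with ⟨f, i g⟩_H = 0 for all g ∈ G_n, this r satisfies ‖r‖_W ≤ ‖f − i w‖_H. -/
open scoped InnerProductSpace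

/-- Let `H`, `W` be real Hilbert spaces, `i : W → H` continuous linear
with `‖i w‖ ≤ ‖w‖`, `G` a gradient-type closed subspace of `W`
(`⟪w, g⟫_W = ⟪i w, i g⟫_H` for `w ∈ W`, `g ∈ G`) and `Gn` a finite-dimensional subspace
of `G`.  For every `w ∈ W` there exists a unique `r ∈ Gn` such that
`⟪i w + i r, i g⟫_H = 0` for all `g ∈ Gn`.  Moreover, for every `f ∈ H` with
`⟪f, i g⟫_H = 0` for all `g ∈ Gn`, this `r` satisfies `‖r‖_W ≤ ‖f − i w‖_H`. -/
theorem stmt_6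
    {H W : Type*} [NormedAddCommGroup H] [InnerProductSpace ℝ H] [CompleteSpace H]
    [NormedAddCommGroup W] [InnerProductSpace ℝ W] [CompleteSpace W]
    (i : W →L[ℝ] H) (hi : ∀ w : W, ‖i w‖ ≤ ‖w‖)
    (G : Submodule ℝ W) (hGclosed : IsClosed (G : Set W))
    (hG : ∀ w : W, ∀ g ∈ G, ⟪w, g⟫_ℝ = ⟪i w, i g⟫_ℝ)
    (Gn : Submodule ℝ W) (hGnG : Gn ≤ G) (hGnfin : FiniteDimensional ℝ Gn) :
    ∀ w : W,
      (∃! r : W, r ∈ Gn ∧ ∀ g ∈ Gn, ⟪i w + i r, i g⟫_ℝ = 0) ∧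
      (∀ r : W, (r ∈ Gn ∧ ∀ g ∈ Gn, ⟪i w + i r, i g⟫_ℝ = 0) →
        ∀ f : H, (∀ g ∈ Gn, ⟪f, i g⟫_ℝ = 0) → ‖r‖ ≤ ‖f - i w‖) := by
  intro w
  have key : ∀ r : W, ∀ g ∈ Gn, ⟪i w + i r, i g⟫_ℝ = ⟪w + r, g⟫_ℝ := by
    intro r g hg
    rw [hG _ g (hGnG hg), map_add]
  refine ⟨⟨-(Gn.starProjection w), ⟨?_, ?_⟩, ?_⟩, ?_⟩
  · exact Gn.neg_mem (Submodule.starProjection_apply_mem Gn w)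
  · intro g hg
    rw [key _ g hg, ← sub_eq_add_neg]
    exact Submodule.starProjection_inner_eq_zero w g hg
  · rintro y ⟨hy, h⟩
    have h2 : Gn.starProjection w = -y := by
      apply Submodule.eq_starProjection_of_mem_of_inner_eq_zero (Gn.neg_mem hy)
      intro g hg
      rw [sub_neg_eq_add, ← key y g hg]
      exact h g hg
    rw [h2, neg_neg]
  · rintro r ⟨hr, h⟩ f hf
    have h1 := h r hr
    have h2 := hf r hr
    have h3 := hG r r (hGnG hr)
    have h4 := real_inner_le_norm (f - i w) (i r)
    rw [inner_add_left] at h1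
    rw [inner_sub_left] at h4
    rw [real_inner_self_eq_norm_sq] at h3
    have h5 : ‖f - i w‖ * ‖i r‖ ≤ ‖f - i w‖ * ‖r‖ :=
      mul_le_mul_of_nonneg_left (hi r) (norm_nonneg _)
    by_contra! hlt
    have h6 : 0 < ‖r‖ := lt_of_le_of_lt (norm_nonneg _) hlt
    nlinarith
end

section
/- Fix finite-dimensional subspaces X_n of W and G_n of G, and assume that for every x ∈ X_n there exists g ∈ G with x + g ∈ V. Let f ∈ H satisfy ⟨f, i g⟩_H = 0 for all g ∈ G. Then, writing u := u_V(f) and u_n := u_{V_n}(f) for the elements representing R_V f = i u and R_{V_n} f = i u_n, one has ⟨u − u_n, m⟩_W = 0 for every m ∈ X_n + G_n; that is, u − u_n is W-orthogonal to the sum space X_n + G_n. -/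
open scoped InnerProductSpace

/-- Setting: `H`, `W` real Hilbert spaces, `i : W → H` continuous linear
with `‖i w‖ ≤ ‖w‖`, `G` a gradient-type closed subspace,
`V := {w : ∀ g ∈ G, ⟪i w, i g⟫ = 0}` and, for finite-dimensional `Xn ≤ W`, `Gn ≤ G`,
`Vn := {w ∈ Xn + Gn : ∀ g ∈ Gn, ⟪i w, i g⟫ = 0}`.  Assume every `x ∈ Xn` can be
corrected by some `g ∈ G` so that `x + g ∈ V`.  Let `f ∈ H` satisfy `⟪f, i g⟫ = 0` for
all `g ∈ G`, and let `u := u_V(f)`, `un := u_{Vn}(f)` be the Riesz representatives with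
`R_V f = i u`, `R_{Vn} f = i un`.  Then `⟪u − un, m⟫_W = 0` for every `m ∈ Xn + Gn`. -/
theorem stmt_7
    {H W : Type*} [NormedAddCommGroup H] [InnerProductSpace ℝ H] [CompleteSpace H]
    [NormedAddCommGroup W] [InnerProductSpace ℝ W] [CompleteSpace W]
    (i : W →L[ℝ] H) (hi : ∀ w : W, ‖i w‖ ≤ ‖w‖)
    (G : Submodule ℝ W) (hGclosed : IsClosed (G : Set W))
    (hG : ∀ w : W, ∀ g ∈ G, ⟪w, g⟫_ℝ = ⟪i w, i g⟫_ℝ)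
    (Xn : Submodule ℝ W) (hXnfin : FiniteDimensional ℝ Xn)
    (Gn : Submodule ℝ W) (hGnG : Gn ≤ G) (hGnfin : FiniteDimensional ℝ Gn)
    (hcorrect : ∀ x ∈ Xn, ∃ g ∈ G, ∀ g' ∈ G, ⟪i (x + g), i g'⟫_ℝ = 0)
    (f : H) (hf : ∀ g ∈ G, ⟪f, i g⟫_ℝ = 0)
    (u : W) (humem : ∀ g ∈ G, ⟪i u, i g⟫_ℝ = 0)
    (hu : ∀ v : W, (∀ g ∈ G, ⟪i v, i g⟫_ℝ = 0) → ⟪u, v⟫_ℝ = ⟪f, i v⟫_ℝ)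
    (un : W) (hunmem : un ∈ Xn ⊔ Gn) (hunorth : ∀ g ∈ Gn, ⟪i un, i g⟫_ℝ = 0)
    (hun : ∀ v ∈ Xn ⊔ Gn, (∀ g ∈ Gn, ⟪i v, i g⟫_ℝ = 0) → ⟪un, v⟫_ℝ = ⟪f, i v⟫_ℝ) :
    ∀ m ∈ Xn ⊔ Gn, ⟪u - un, m⟫_ℝ = 0 := by
  intro m hm
  have h1 : ⟪u, m⟫_ℝ = ⟪f, i m⟫_ℝ := by
    obtain ⟨x, hx, g, hg, rfl⟩ := Submodule.mem_sup.1 hm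
    obtain ⟨k, hk, hxk⟩ := hcorrect x hx
    have e1 := hu (x + k) hxk
    have e2 := hG u k hk
    have e3 := hG u g (hGnG hg)
    have e4 := humem k hk
    have e5 := humem g (hGnG hg)
    have e6 := hf k hk
    have e7 := hf g (hGnG hg)
    simp only [map_add, inner_add_right] at e1 ⊢
    linarith
  have h2 : ⟪un, m⟫_ℝ = ⟪f, i m⟫_ℝ := by
    have hp : Gn.starProjection m ∈ Gn := Submodule.starProjection_apply_mem Gn m
    have hort : ∀ g ∈ Gn, ⟪m - Gn.starProjection m, g⟫_ℝ = 0 := fun g hg =>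
      Submodule.starProjection_inner_eq_zero m g hg
    generalize Gn.starProjection m = p at hp hort
    have e1 := hun (m - p) (Submodule.sub_mem _ hm (Submodule.mem_sup_right hp))
      (fun g hg => by rw [← hG _ g (hGnG hg)]; exact hort g hg)
    have e2 := hG un p (hGnG hp)
    have e3 := hunorth p hp
    have e4 := hf p (hGnG hp)
    simp only [map_sub, inner_sub_right] at e1
    linarith
  rw [inner_sub_left, h1, h2, sub_self]
end

section
/- For each n ∈ ℕ let V_n be a finite-dimensional subspace of W and set R_n := R_{V_n}. Assume the discrete compactness property: for every strictly increasing sequence (n_k) of natural numbers and every sequence (ξ_k) with ξ_k ∈ V_{n_k} for all k and sup_k ‖ξ_k‖_W < ∞, the sequence (i ξ_k) has a subsequence converging in H. Then the family (R_n)_{n∈ℕ} is collectively compact: for every bounded set B ⊆ H, the closure in H of ⋃_{n∈ℕ} R_n(B) is compact. -/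
open scoped InnerProductSpace
open Filter Topology

/-- Let `H`, `W` be real Hilbert spaces, `i : W → H` continuous linear
with `‖i w‖ ≤ ‖w‖`.  For each `n ∈ ℕ` let `Vn n` be a finite-dimensional subspace of `W`
and `Rn := R_{Vn n}` the solution operator given by the Riesz representative `u n f`.
Assume the discrete compactness property: for every strictly increasing `(n_k)` and every
sequence `(ξ_k)` with `ξ_k ∈ Vn (n_k)` and `sup_k ‖ξ_k‖ < ∞`, the sequence `(i ξ_k)` has
a subsequence converging in `H`.  Then the family `(Rn)` is collectively compact: for
every bounded `B ⊆ H`, the closure in `H` of `⋃ n, Rn '' B` is compact. -/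
theorem stmt_8
    {H W : Type*} [NormedAddCommGroup H] [InnerProductSpace ℝ H] [CompleteSpace H]
    [NormedAddCommGroup W] [InnerProductSpace ℝ W] [CompleteSpace W]
    (i : W →L[ℝ] H) (hi : ∀ w : W, ‖i w‖ ≤ ‖w‖)
    (Vn : ℕ → Submodule ℝ W) (hVnfin : ∀ n, FiniteDimensional ℝ (Vn n))
    (u : ℕ → H → W) (humem : ∀ n (f : H), u n f ∈ Vn n)
    (hu : ∀ n (f : H), ∀ v ∈ Vn n, ⟪u n f, v⟫_ℝ = ⟪f, i v⟫_ℝ)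
    (hdc : ∀ nk : ℕ → ℕ, StrictMono nk → ∀ ξ : ℕ → W,
      (∀ k, ξ k ∈ Vn (nk k)) → (∃ C : ℝ, ∀ k, ‖ξ k‖ ≤ C) →
      ∃ φ : ℕ → ℕ, StrictMono φ ∧ ∃ l : H,
        Tendsto (fun k => i (ξ (φ k))) atTop (nhds l)) :
    ∀ B : Set H, Bornology.IsBounded B →
      IsCompact (closure (⋃ n : ℕ, (fun f => i (u n f)) '' B)) := by
  intro B hB
  obtain ⟨C, hC⟩ := hB.exists_norm_le
  have hbd : ∀ n, ∀ f ∈ B, ‖u n f‖ ≤ C := by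
    intro n f hf
    have h1 := hu n f (u n f) (humem n f)
    rw [real_inner_self_eq_norm_sq] at h1
    have h2 := real_inner_le_norm f (i (u n f))
    have h3 : ‖f‖ * ‖i (u n f)‖ ≤ C * ‖u n f‖ :=
      mul_le_mul (hC f hf) (hi _) (norm_nonneg _) ((norm_nonneg f).trans (hC f hf))
    have h0 : 0 ≤ C := (norm_nonneg f).trans (hC f hf)
    by_contra hlt
    push Not at hlt
    nlinarith [norm_nonneg (u n f)]
  have key : ∀ (m : ℕ → ℕ) (ξ : ℕ → W), (∀ k, ξ k ∈ Vn (m k)) → (∀ k, ‖ξ k‖ ≤ C) →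
      ∃ φ : ℕ → ℕ, StrictMono φ ∧ ∃ l : H, Tendsto (fun k => i (ξ (φ k))) atTop (nhds l) := by
    intro m ξ hm hξ
    by_cases hN : ∃ N, ∃ᶠ k in atTop, m k = N
    · obtain ⟨N, hN⟩ := hN
      obtain ⟨φ, hφ, hφN⟩ := extraction_of_frequently_atTop hN
      have := hVnfin N
      have : ProperSpace (Vn N) := FiniteDimensional.proper ℝ _
      have hmem : ∀ k, ξ (φ k) ∈ Vn N := fun k => hφN k ▸ hm (φ k)
      obtain ⟨a, -, ψ, hψ, ha⟩ := (isCompact_closedBall (0 : Vn N) C).tendsto_subseq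
        (x := fun k => (⟨ξ (φ k), hmem k⟩ : Vn N)) (fun k => by simpa using hξ (φ k))
      refine ⟨φ ∘ ψ, hφ.comp hψ, i a, ?_⟩
      exact ((i.continuous.comp continuous_subtype_val).tendsto a).comp ha
    · have ht : Tendsto m atTop atTop := by
        refine tendsto_atTop.2 fun b => ?_
        push Not at hN
        have := (Filter.eventually_all_finset (l := atTop) (Finset.range b)
          (p := fun N k => m k ≠ N)).2 (fun N _ => by simpa using hN N)
        filter_upwards [this] with k hk
        by_contra hlt
        exact hk (m k) (Finset.mem_range.2 (not_le.1 hlt)) rfl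
      obtain ⟨φ, hφ, hmφ⟩ := strictMono_subseq_of_tendsto_atTop ht
      obtain ⟨ψ, hψ, l, hl⟩ := hdc _ hmφ (ξ ∘ φ) (fun k => hm (φ k)) ⟨C, fun k => hξ (φ k)⟩
      exact ⟨φ ∘ ψ, hφ.comp hψ, l, hl⟩
  apply IsSeqCompact.isCompact
  intro x hx
  have hy : ∀ k : ℕ, ∃ n, ∃ f ∈ B, dist (x k) (i (u n f)) < 1 / ((k : ℝ) + 1) := by
    intro k
    obtain ⟨y, hy, hd⟩ := Metric.mem_closure_iff.1 (hx k) _ (Nat.one_div_pos_of_nat (n := k))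
    obtain ⟨n, f, hf, rfl⟩ := Set.mem_iUnion.1 hy
    exact ⟨n, f, hf, hd⟩
  choose m f hf hd using hy
  obtain ⟨φ, hφ, l, hl⟩ := key m (fun k => u (m k) (f k)) (fun k => humem _ _)
    (fun k => hbd _ _ (hf k))
  have h0 : Tendsto (fun k => dist (i (u (m (φ k)) (f (φ k)))) (x (φ k))) atTop (nhds 0) := by
    refine squeeze_zero (fun _ => dist_nonneg) (fun k => ?_)
      ((tendsto_one_div_add_atTop_nhds_zero_nat (𝕜 := ℝ)).comp hφ.tendsto_atTop)
    rw [dist_comm]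
    exact (hd (φ k)).le
  have hxl : Tendsto (x ∘ φ) atTop (nhds l) := (tendsto_iff_of_dist h0).1 hl
  exact ⟨l, isClosed_closure.mem_of_tendsto hxl (Eventually.of_forall fun k => hx _), φ, hφ, hxl⟩
end

section
/- Let V be a closed subspace of W and, for each n ∈ ℕ, let V_n be a finite-dimensional subspace of W. Assume: (a) for every η ∈ V there exists a sequence (η_n) with η_n ∈ V_n and ‖η − η_n‖_W → 0; (b) for every strictly increasing sequence (n_k) of natural numbers and every sequence (w_k) with w_k ∈ V_{n_k} that converges weakly in W to some g, one has g ∈ V. Then for every f ∈ H, ‖u_V(f) − u_{V_n}(f)‖_W → 0 as n → ∞; in particular, ‖R_V f − R_{V_n} f‖_H → 0, i.e. the operators R_{V_n} converge pointwise on H to R_V. -/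
open scoped InnerProductSpace
open Filter Topology

theorem weak_subseq_aux {W : Type*} [NormedAddCommGroup W] [InnerProductSpace ℝ W]
    [CompleteSpace W] (w : ℕ → W) (C : ℝ) (hC : ∀ n, ‖w n‖ ≤ C) :
    ∃ (g : W) (φ : ℕ → ℕ), StrictMono φ ∧
      ∀ y : W, Tendsto (fun k => ⟪w (φ k), y⟫_ℝ) atTop (nhds ⟪g, y⟫_ℝ) := by
  let K : Submodule ℝ W := (Submodule.span ℝ (Set.range w)).topologicalClosure
  have hKc : IsClosed (K : Set W) := Submodule.isClosed_topologicalClosure _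
  have : CompleteSpace K := hKc.completeSpace_coe
  have hsep : TopologicalSpace.IsSeparable (K : Set W) := by
    have := ((Set.countable_range w).isSeparable.span (R := ℝ)).closure
    simpa [K, Submodule.topologicalClosure_coe] using this
  have : TopologicalSpace.SeparableSpace K := hsep.separableSpace
  have hwK : ∀ n, w n ∈ K := fun n =>
    Submodule.le_topologicalClosure _ (Submodule.subset_span ⟨n, rfl⟩)
  let x : ℕ → WeakDual ℝ K := fun n =>
    StrongDual.toWeakDual (InnerProductSpace.toDual ℝ K ⟨w n, hwK n⟩)
  have hx : ∀ n, x n ∈ (WeakDual.toStrongDual ⁻¹' Metric.closedBall (0 : StrongDual ℝ K) C) := by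
    intro n
    have : ‖InnerProductSpace.toDual ℝ K ⟨w n, hwK n⟩‖ ≤ C := by
      rw [LinearIsometryEquiv.norm_map]
      exact hC n
    exact mem_closedBall_zero_iff.mpr this
  obtain ⟨a, -, φ, hφ, hlim⟩ := WeakDual.isSeqCompact_closedBall ℝ K (0 : StrongDual ℝ K) C hx
  let g : K := (InnerProductSpace.toDual ℝ K).symm (WeakDual.toStrongDual a)
  refine ⟨g, φ, hφ, fun y => ?_⟩
  have key : ∀ v : K, ⟪(v : W), y⟫_ℝ = ⟪v, K.orthogonalProjectionOnto y⟫_ℝ := by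
    intro v
    exact (Submodule.inner_orthogonalProjectionOnto_eq_of_mem_left v y).symm
  have h1 := ((WeakDual.eval_continuous (K.orthogonalProjectionOnto y)).tendsto a).comp hlim
  have h2 : ⟪(g : W), y⟫_ℝ = a (K.orthogonalProjectionOnto y) := by
    rw [key]
    exact InnerProductSpace.toDual_symm_apply
  rw [h2]
  refine h1.congr fun k => ?_
  exact (key ⟨w (φ k), hwK _⟩).symm

/-- Let `H`, `W` be real Hilbert spaces, `i : W → H` continuous linear
with `‖i w‖ ≤ ‖w‖`.  Let `V` be a closed subspace of `W` and `(Vn n)` finite-dimensional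
subspaces of `W`.  Assume (a) every `η ∈ V` is approximated by a sequence `η_n ∈ Vn n`
in the `W`-norm, and (b) every weak limit in `W` of a sequence `w_k ∈ Vn (n_k)` (with
`(n_k)` strictly increasing) belongs to `V`.  Then for every `f ∈ H` the Riesz
representatives satisfy `‖u_V(f) − u_{Vn n}(f)‖_W → 0`; in particular
`‖R_V f − R_{Vn n} f‖_H → 0`, i.e. the `R_{Vn n}` converge pointwise on `H` to `R_V`. -/
theorem stmt_9
    {H W : Type*} [NormedAddCommGroup H] [InnerProductSpace ℝ H] [CompleteSpace H]
    [NormedAddCommGroup W] [InnerProductSpace ℝ W] [CompleteSpace W]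
    (i : W →L[ℝ] H) (hi : ∀ w : W, ‖i w‖ ≤ ‖w‖)
    (V : Submodule ℝ W) (hVclosed : IsClosed (V : Set W))
    (Vn : ℕ → Submodule ℝ W) (hVnfin : ∀ n, FiniteDimensional ℝ (Vn n))
    (ha : ∀ η ∈ V, ∃ ηn : ℕ → W, (∀ n, ηn n ∈ Vn n) ∧
      Tendsto (fun n => ‖η - ηn n‖) atTop (nhds 0))
    (hb : ∀ nk : ℕ → ℕ, StrictMono nk → ∀ w : ℕ → W, (∀ k, w k ∈ Vn (nk k)) →
      ∀ g : W, (∀ y : W, Tendsto (fun k => ⟪w k, y⟫_ℝ) atTop (nhds ⟪g, y⟫_ℝ)) →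
      g ∈ V)
    (uV : H → W) (huVmem : ∀ f : H, uV f ∈ V)
    (huV : ∀ f : H, ∀ v ∈ V, ⟪uV f, v⟫_ℝ = ⟪f, i v⟫_ℝ)
    (un : ℕ → H → W) (hunmem : ∀ n (f : H), un n f ∈ Vn n)
    (hun : ∀ n (f : H), ∀ v ∈ Vn n, ⟪un n f, v⟫_ℝ = ⟪f, i v⟫_ℝ) :
    ∀ f : H,
      Tendsto (fun n => ‖uV f - un n f‖) atTop (nhds 0) ∧
      Tendsto (fun n => ‖i (uV f) - i (un n f)‖) atTop (nhds 0) := by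
  intro f
  have main : Tendsto (fun n => ‖uV f - un n f‖) atTop (nhds 0) := by
    have hF : ∀ w : W, ⟪f, i w⟫_ℝ = ⟪ContinuousLinearMap.adjoint i f, w⟫_ℝ := fun w =>
      (ContinuousLinearMap.adjoint_inner_left i w f).symm
    have hbd : ∀ n, ‖un n f‖ ≤ ‖f‖ := by
      intro n
      have h1 := hun n f _ (hunmem n f)
      rw [real_inner_self_eq_norm_mul_norm] at h1
      have h2 := real_inner_le_norm f (i (un n f))
      have h3 := mul_le_mul_of_nonneg_left (hi (un n f)) (norm_nonneg f)
      by_contra! h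
      nlinarith [norm_nonneg f]
    refine tendsto_of_subseq_tendsto fun ns hns => ?_
    obtain ⟨ψ, hψ, hψ2⟩ := strictMono_subseq_of_tendsto_atTop hns
    obtain ⟨g, φ, hφ, hg⟩ := weak_subseq_aux (fun k => un (ns (ψ k)) f) ‖f‖ (fun k => hbd _)
    have hmono : StrictMono (fun k => ns (ψ (φ k))) := hψ2.comp hφ
    have hgV : g ∈ V := hb _ hmono (fun k => un (ns (ψ (φ k))) f) (fun k => hunmem _ _) g hg
    have hgη : ∀ η ∈ V, ⟪g, η⟫_ℝ = ⟪f, i η⟫_ℝ := by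
      intro η hη
      obtain ⟨ηn, hηn, hlim⟩ := ha η hη
      have hl : Tendsto (fun k => ‖η - ηn (ns (ψ (φ k)))‖) atTop (nhds 0) :=
        hlim.comp hmono.tendsto_atTop
      have hd : Tendsto (fun k => ⟪un (ns (ψ (φ k))) f, η⟫_ℝ - ⟪f, i η⟫_ℝ) atTop (nhds 0) := by
        refine squeeze_zero_norm (a := fun k => 2 * ‖f‖ * ‖η - ηn (ns (ψ (φ k)))‖) (fun k => ?_)
          (by simpa using hl.const_mul (2 * ‖f‖))
        set n := ns (ψ (φ k))
        have e : ⟪un n f, η⟫_ℝ - ⟪f, i η⟫_ℝ = ⟪un n f, η - ηn n⟫_ℝ - ⟪f, i (η - ηn n)⟫_ℝ := by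
          rw [map_sub, inner_sub_right, inner_sub_right, hun n f _ (hηn n)]
          ring
        rw [e]
        have h1 := norm_inner_le_norm (𝕜 := ℝ) (un n f) (η - ηn n)
        have h2 := norm_inner_le_norm (𝕜 := ℝ) f (i (η - ηn n))
        have h3 := mul_le_mul_of_nonneg_left (hi (η - ηn n)) (norm_nonneg f)
        have h4 := mul_le_mul_of_nonneg_right (hbd n) (norm_nonneg (η - ηn n))
        have h5 := norm_sub_le ⟪un n f, η - ηn n⟫_ℝ ⟪f, i (η - ηn n)⟫_ℝ
        linarith
      have := tendsto_nhds_unique hd ((hg η).sub_const _)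
      linarith
    have hgu : g = uV f := by
      have hm := V.sub_mem hgV (huVmem f)
      have : ⟪g - uV f, g - uV f⟫_ℝ = 0 := by
        rw [inner_sub_left, hgη _ hm, huV f _ hm, sub_self]
      exact sub_eq_zero.mp (inner_self_eq_zero.mp this)
    subst hgu
    refine ⟨fun k => ψ (φ k), ?_⟩
    have hsq : Tendsto (fun k => ‖uV f - un (ns (ψ (φ k))) f‖ ^ 2) atTop (nhds 0) := by
      have h1 := hg (uV f)
      have h2 := hg (ContinuousLinearMap.adjoint i f)
      have h3 := (h2.sub (h1.const_mul 2)).add_const (‖uV f‖ ^ 2)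
      have e0 : ⟪uV f, ContinuousLinearMap.adjoint i f⟫_ℝ - 2 * ⟪uV f, uV f⟫_ℝ + ‖uV f‖ ^ 2
          = 0 := by
        rw [real_inner_comm, ← hF, ← huV f _ (huVmem f), real_inner_self_eq_norm_sq]
        ring
      rw [e0] at h3
      refine h3.congr fun k => ?_
      rw [norm_sub_sq_real, real_inner_comm, ← hF, ← hun _ f _ (hunmem _ f),
        real_inner_self_eq_norm_sq, real_inner_comm (uV f)]
      ring
    have := hsq.sqrt
    simpa [Real.sqrt_sq] using this
  refine ⟨main, squeeze_zero (fun _ => norm_nonneg _) (fun n => ?_) main⟩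
  rw [← map_sub]
  exact hi _
end

section
/- Fix finite-dimensional subspaces X_n of W and G_n of G, and assume that for every x ∈ X_n there exists g ∈ G with x + g ∈ V. Let μ > 0 and let ξ ∈ V be such that u_V(i ξ) = μ ξ (so that i ξ is an eigenvector of R_V with eigenvalue μ, realized in V). Then, with u_n := u_{V_n}(i ξ) the discrete solution for the datum i ξ, for every v ∈ V_n one has ‖μ ξ − u_n‖_W ≤ μ ‖ξ − v‖_W; that is, ‖u_V(i ξ) − u_{V_n}(i ξ)‖_W ≤ μ · dist_W(ξ, V_n). -/
open scoped InnerProductSpace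

/-- Setting: `H`, `W` real Hilbert spaces, `i : W → H` continuous
linear with `‖i w‖ ≤ ‖w‖`, `G` a gradient-type closed subspace,
`V := {w : ∀ g ∈ G, ⟪i w, i g⟫ = 0}`, `Xn ≤ W` and `Gn ≤ G` finite-dimensional,
`Vn := {w ∈ Xn + Gn : ∀ g ∈ Gn, ⟪i w, i g⟫ = 0}`; assume every `x ∈ Xn` can be corrected
by some `g ∈ G` so that `x + g ∈ V`.  Let `μ > 0` and `ξ ∈ V` with `u_V(i ξ) = μ • ξ`
(so `i ξ` is an eigenvector of `R_V` with eigenvalue `μ`, realized in `V`).  Then, with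
`un := u_{Vn}(i ξ)` the discrete solution for the datum `i ξ`, for every `v ∈ Vn` one has
`‖μ • ξ − un‖_W ≤ μ ‖ξ − v‖_W`. -/
theorem stmt_10
    {H W : Type*} [NormedAddCommGroup H] [InnerProductSpace ℝ H] [CompleteSpace H]
    [NormedAddCommGroup W] [InnerProductSpace ℝ W] [CompleteSpace W]
    (i : W →L[ℝ] H) (hi : ∀ w : W, ‖i w‖ ≤ ‖w‖)
    (G : Submodule ℝ W) (hGclosed : IsClosed (G : Set W))
    (hG : ∀ w : W, ∀ g ∈ G, ⟪w, g⟫_ℝ = ⟪i w, i g⟫_ℝ)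
    (Xn : Submodule ℝ W) (hXnfin : FiniteDimensional ℝ Xn)
    (Gn : Submodule ℝ W) (hGnG : Gn ≤ G) (hGnfin : FiniteDimensional ℝ Gn)
    (hcorrect : ∀ x ∈ Xn, ∃ g ∈ G, ∀ g' ∈ G, ⟪i (x + g), i g'⟫_ℝ = 0)
    (μ : ℝ) (hμ : 0 < μ)
    (ξ : W) (hξV : ∀ g ∈ G, ⟪i ξ, i g⟫_ℝ = 0)
    (hEig : ∀ v : W, (∀ g ∈ G, ⟪i v, i g⟫_ℝ = 0) → ⟪μ • ξ, v⟫_ℝ = ⟪i ξ, i v⟫_ℝ)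
    (un : W) (hunmem : un ∈ Xn ⊔ Gn) (hunorth : ∀ g ∈ Gn, ⟪i un, i g⟫_ℝ = 0)
    (hun : ∀ v ∈ Xn ⊔ Gn, (∀ g ∈ Gn, ⟪i v, i g⟫_ℝ = 0) →
      ⟪un, v⟫_ℝ = ⟪i ξ, i v⟫_ℝ) :
    ∀ v ∈ Xn ⊔ Gn, (∀ g ∈ Gn, ⟪i v, i g⟫_ℝ = 0) →
      ‖μ • ξ - un‖ ≤ μ * ‖ξ - v‖ := by
  intro v hv hvo
  have key : ∀ w ∈ Xn ⊔ Gn, ⟪μ • ξ, w⟫_ℝ = ⟪i ξ, i w⟫_ℝ := by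
    intro w hw
    obtain ⟨x, hx, g0, hg0, rfl⟩ := Submodule.mem_sup.1 hw
    obtain ⟨g, hg, hxg⟩ := hcorrect x hx
    have h1 := hEig (x + g) hxg
    have h2 := hG ξ g hg
    have h3 := hξV g hg
    have h4 := hG ξ g0 (hGnG hg0)
    have h5 := hξV g0 (hGnG hg0)
    simp only [map_add, inner_add_right, real_inner_smul_left] at h1 ⊢
    rw [h2, h3] at h1
    rw [h4, h5]
    linarith
  have hd : μ • v - un ∈ Xn ⊔ Gn := Submodule.sub_mem _ (Submodule.smul_mem _ _ hv) hunmem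
  have hdo : ∀ g ∈ Gn, ⟪i (μ • v - un), i g⟫_ℝ = 0 := by
    intro g hg
    rw [map_sub, map_smul, inner_sub_left, real_inner_smul_left, hvo g hg, hunorth g hg]
    simp
  have horth : ⟪μ • ξ - un, μ • v - un⟫_ℝ = 0 := by
    rw [inner_sub_left, key _ hd, hun _ hd hdo, sub_self]
  have heq : ⟪μ • ξ - un, μ • ξ - un⟫_ℝ = ⟪μ • ξ - un, μ • (ξ - v)⟫_ℝ := by
    have : μ • ξ - un = μ • (ξ - v) + (μ • v - un) := by
      rw [smul_sub]; abel
    conv_lhs => rw [this, inner_add_right, ← this, horth, add_zero]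
  have hle := real_inner_le_norm (μ • ξ - un) (μ • (ξ - v))
  rw [← heq, real_inner_self_eq_norm_sq, norm_smul, Real.norm_of_nonneg hμ.le] at hle
  rcases (norm_nonneg (μ • ξ - un)).eq_or_lt with h0 | h0
  · rw [← h0]; positivity
  · rw [sq] at hle
    exact le_of_mul_le_mul_left hle h0
end

section
/- Fix finite-dimensional subspaces X_n of W and G_n of G, and assume that for every x ∈ X_n there exists g ∈ G with x + g ∈ V. Then for all f, f' ∈ H with ⟨f, i g⟩_H = 0 and ⟨f', i g⟩_H = 0 for every g ∈ G, the identity ⟨R_V f − R_{V_n} f, f'⟩_H = ⟨u_V(f) − u_{V_n}(f), u_V(f') − u_{V_n}(f')⟩_W holds; consequently |⟨(R_V − R_{V_n}) f, f'⟩_H| ≤ ‖u_V(f) − u_{V_n}(f)‖_W · ‖u_V(f') − u_{V_n}(f')‖_W. -/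
open scoped InnerProductSpace

/-- Setting: `H`, `W` real Hilbert spaces, `i : W → H` continuous
linear with `‖i w‖ ≤ ‖w‖`, `G` a gradient-type closed subspace,
`V := {w : ∀ g ∈ G, ⟪i w, i g⟫ = 0}`, `Xn ≤ W` and `Gn ≤ G` finite-dimensional,
`Vn := {w ∈ Xn + Gn : ∀ g ∈ Gn, ⟪i w, i g⟫ = 0}`; assume every `x ∈ Xn` can be corrected
by some `g ∈ G` so that `x + g ∈ V`.  Then for all `f, f' ∈ H` orthogonal to `i(G)`,
writing `u = u_V(f)`, `u' = u_V(f')`, `un = u_{Vn}(f)`, `un' = u_{Vn}(f')`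
(so `R_V f = i u` etc.), one has
`⟪R_V f − R_{Vn} f, f'⟫_H = ⟪u − un, u' − un'⟫_W`, and consequently
`|⟪(R_V − R_{Vn}) f, f'⟫_H| ≤ ‖u − un‖_W · ‖u' − un'‖_W`. -/
theorem stmt_11
    {H W : Type*} [NormedAddCommGroup H] [InnerProductSpace ℝ H] [CompleteSpace H]
    [NormedAddCommGroup W] [InnerProductSpace ℝ W] [CompleteSpace W]
    (i : W →L[ℝ] H) (hi : ∀ w : W, ‖i w‖ ≤ ‖w‖)
    (G : Submodule ℝ W) (hGclosed : IsClosed (G : Set W))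
    (hG : ∀ w : W, ∀ g ∈ G, ⟪w, g⟫_ℝ = ⟪i w, i g⟫_ℝ)
    (Xn : Submodule ℝ W) (hXnfin : FiniteDimensional ℝ Xn)
    (Gn : Submodule ℝ W) (hGnG : Gn ≤ G) (hGnfin : FiniteDimensional ℝ Gn)
    (hcorrect : ∀ x ∈ Xn, ∃ g ∈ G, ∀ g' ∈ G, ⟪i (x + g), i g'⟫_ℝ = 0)
    (f f' : H) (hf : ∀ g ∈ G, ⟪f, i g⟫_ℝ = 0) (hf' : ∀ g ∈ G, ⟪f', i g⟫_ℝ = 0)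
    (u : W) (humem : ∀ g ∈ G, ⟪i u, i g⟫_ℝ = 0)
    (hu : ∀ v : W, (∀ g ∈ G, ⟪i v, i g⟫_ℝ = 0) → ⟪u, v⟫_ℝ = ⟪f, i v⟫_ℝ)
    (u' : W) (humem' : ∀ g ∈ G, ⟪i u', i g⟫_ℝ = 0)
    (hu' : ∀ v : W, (∀ g ∈ G, ⟪i v, i g⟫_ℝ = 0) → ⟪u', v⟫_ℝ = ⟪f', i v⟫_ℝ)
    (un : W) (hunmem : un ∈ Xn ⊔ Gn) (hunorth : ∀ g ∈ Gn, ⟪i un, i g⟫_ℝ = 0)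
    (hun : ∀ v ∈ Xn ⊔ Gn, (∀ g ∈ Gn, ⟪i v, i g⟫_ℝ = 0) → ⟪un, v⟫_ℝ = ⟪f, i v⟫_ℝ)
    (un' : W) (hunmem' : un' ∈ Xn ⊔ Gn) (hunorth' : ∀ g ∈ Gn, ⟪i un', i g⟫_ℝ = 0)
    (hun' : ∀ v ∈ Xn ⊔ Gn, (∀ g ∈ Gn, ⟪i v, i g⟫_ℝ = 0) → ⟪un', v⟫_ℝ = ⟪f', i v⟫_ℝ) :
    ⟪i u - i un, f'⟫_ℝ = ⟪u - un, u' - un'⟫_ℝ ∧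
    |⟪i u - i un, f'⟫_ℝ| ≤ ‖u - un‖ * ‖u' - un'‖ := by
  have key : ∀ (F : H) (U : W), (∀ g ∈ G, ⟪F, i g⟫_ℝ = 0) → (∀ g ∈ G, ⟪i U, i g⟫_ℝ = 0) →
      (∀ v : W, (∀ g ∈ G, ⟪i v, i g⟫_ℝ = 0) → ⟪U, v⟫_ℝ = ⟪F, i v⟫_ℝ) →
      ∀ w ∈ Xn ⊔ Gn, ⟪U, w⟫_ℝ = ⟪F, i w⟫_ℝ := by
    intro F U hF hUm hU w hw
    obtain ⟨x, hx, y, hy, rfl⟩ := Submodule.mem_sup.1 hw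
    obtain ⟨g, hg, hxg⟩ := hcorrect x hx
    have hd : y - g ∈ G := G.sub_mem (hGnG hy) hg
    have h1 := hU _ hxg
    have h2 : ⟪U, y - g⟫_ℝ = 0 := (hG U _ hd).trans (hUm _ hd)
    have h3 := hF _ hd
    have e : x + y = (x + g) + (y - g) := by abel
    rw [e, map_add i (x + g), inner_add_right, h1, h2, inner_add_right, h3]
  have a1 := key f u hf humem hu un' hunmem'
  have a2 := hun un' hunmem' hunorth'
  have a3 := hu' u humem
  have a4 := key f' u' hf' humem' hu' un hunmem
  have main : ⟪i u - i un, f'⟫_ℝ = ⟪u - un, u' - un'⟫_ℝ := by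
    rw [real_inner_comm, inner_sub_right, inner_sub_right, inner_sub_left, inner_sub_left,
      real_inner_comm u' u, real_inner_comm u' un]
    linarith
  exact ⟨main, main ▸ abs_real_inner_le_norm _ _⟩
end
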